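/- Let σ > 0, ρ ∈ (−1,1), Σ = σ²·[[1, ρ],[ρ, 1]], and let μ be a Borel probability measure on ℝ² with density x ↦ g(xᵀΣ⁻¹x) with respect to Lebesgue measure for some nonnegative measurable g. Then the pushforward of μ under the resemblance map x = (x₁,x₂) ↦ 2x₁x₂/(x₁² + x₂²) is absolutely continuous with respect to Lebesgue measure, supported on (−1,1), with density r ↦ (1/(π(1 − ρr)))·√((1 − ρ²)/(1 − r²)) for r ∈ (−1,1). -/

import Mathlib

/-!
With `b = x₀ + x₁` and `t = (x₀ - x₁) / (x₀ + x₁)`, the resemblance becomes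
`(1 - t²) / (1 + t²)`, a function of `t` alone, and the quadratic form becomes
`b² q(t) / (2σ²(1 - ρ²))` with `q(t) = (1 - ρ) + (1 + ρ)t²`. The Jacobian is `|b| / 2`
(`lintegral_plane_slopes`), and integrating out `b` leaves a constant `K`, depending on `g`, times
`1 / q(t)` (`radial_scaling`). So `t` has density `K / q(t)`; since `∫ 1 / q = π / √(1 - ρ²)`
(`lintegral_slope_density`) and the total mass is one, `K = √(1 - ρ²) / π`. Pushing this law
forward along the even map `t ↦ (1 - t²) / (1 + t²)` gives the claimed density
(`lintegral_slope_to_resemblance`).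
-/

open MeasureTheory Matrix Real

theorem lintegral_affine_subst (f : ℝ → ENNReal) (hf : Measurable f) {c : ℝ} (hc : c ≠ 0) (d : ℝ) :
    ∫⁻ x, f x = ENNReal.ofReal |c| * ∫⁻ t, f (c * t + d) := by
  have h1 : ∫⁻ x, f x = ∫⁻ x, f (x + d) := (lintegral_add_right_eq_self f d).symm
  rw [h1]
  conv_lhs => rw [← Real.smul_map_volume_mul_left hc]
  rw [lintegral_smul_measure, lintegral_map (by fun_prop) (by fun_prop), smul_eq_mul]

theorem quadForm_eq (σ ρ : ℝ) (hσ : 0 < σ) (hρ : ρ ∈ Set.Ioo (-1 : ℝ) 1) (x : Fin 2 → ℝ) :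
    x ⬝ᵥ ((σ ^ 2 • !![1, ρ; ρ, 1])⁻¹ *ᵥ x)
      = (x 0 ^ 2 - 2 * ρ * x 0 * x 1 + x 1 ^ 2) / (σ ^ 2 * (1 - ρ ^ 2)) := by
  have h1 : 1 - ρ ^ 2 ≠ 0 := by nlinarith [hρ.1, hρ.2]
  have h2 : σ ≠ 0 := hσ.ne'
  have h3 : σ ^ 2 * σ ^ 2 - σ ^ 2 * ρ * (σ ^ 2 * ρ) ≠ 0 := by
    have : σ ^ 2 * σ ^ 2 - σ ^ 2 * ρ * (σ ^ 2 * ρ) = σ^4 * (1 - ρ^2) := by ring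
    rw [this]; positivity
  simp [Matrix.inv_def, Matrix.det_fin_two, Matrix.adjugate_fin_two, Matrix.mulVec, dotProduct, Fin.sum_univ_two]
  field_simp
  ring

/-- The integral over a ray direction depends on the slope only through the factor `q⁻¹`, whatever
the profile `g`: substitute `b ↦ √q * b`. -/
theorem radial_scaling (g : ℝ → ENNReal) (hg : Measurable g) {q : ℝ} (hq : 0 < q) :
    ∫⁻ b, ENNReal.ofReal |b / 2| * g (b ^ 2 * q)
      = ENNReal.ofReal q⁻¹ * ∫⁻ b, ENNReal.ofReal |b / 2| * g (b ^ 2) := by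
  have hs : 0 < √q := Real.sqrt_pos.2 hq
  rw [lintegral_affine_subst (fun b => ENNReal.ofReal |b / 2| * g (b ^ 2)) (by fun_prop) hs.ne' 0,
    ← mul_assoc, ← ENNReal.ofReal_mul (by positivity), ← lintegral_const_mul _ (by fun_prop)]
  refine lintegral_congr fun b => ?_
  rw [← mul_assoc, ← ENNReal.ofReal_mul (by positivity)]
  have : (√q * b + 0) ^ 2 = b ^ 2 * q := by rw [add_zero, mul_pow, Real.sq_sqrt hq.le]; ring
  rw [this]
  congr 2
  rw [add_zero, mul_div_assoc, abs_mul, abs_of_pos hs]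
  have := Real.mul_self_sqrt hq.le
  field_simp
  rw [sq, this]

/-- Lebesgue measure on the plane in the coordinates `b = x₀ + x₁` and `t = (x₀ - x₁) / (x₀ + x₁)`,
so that `x₀ = b(1 + t)/2`, `x₁ = b(1 - t)/2`; the Jacobian is `|b / 2|`. -/
theorem lintegral_plane_slopes (H : ℝ → ℝ → ENNReal) (hH : Measurable (Function.uncurry H)) :
    ∫⁻ x : Fin 2 → ℝ, H (x 0) (x 1)
      = ∫⁻ t, ∫⁻ b, ENNReal.ofReal |b / 2| * H (b / 2 * t + b / 2) (b - (b / 2 * t + b / 2)) := by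
  have hH2 : ∀ {α : Type} [MeasurableSpace α] {u v : α → ℝ}, Measurable u → Measurable v →
      Measurable (fun a => H (u a) (v a)) := fun hu hv => hH.comp (hu.prodMk hv)
  have e := (MeasureTheory.volume_preserving_finTwoArrow ℝ).lintegral_comp hH
  simp only [MeasurableEquiv.finTwoArrow_apply, Function.uncurry] at e
  rw [e, Measure.volume_eq_prod, lintegral_prod _ (hH2 measurable_fst measurable_snd).aemeasurable]
  have s1 : ∀ a, ∫⁻ y, H a y = ∫⁻ b, H a (b - a) := fun a =>
    (lintegral_sub_right_eq_self (fun y => H a y) a).symm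
  simp only [s1]
  -- For fixed `b ≠ 0`, substitute `x₀ = (b / 2) * t + b / 2`; the line `b = 0` is null.
  rw [lintegral_lintegral_swap (f := fun a b => H a (b - a))
      (hH2 measurable_fst (measurable_snd.sub measurable_fst)).aemeasurable,
    lintegral_lintegral_swap (f := fun t b => ENNReal.ofReal |b / 2| *
      H (b / 2 * t + b / 2) (b - (b / 2 * t + b / 2)))]
  · refine lintegral_congr_ae ?_
    filter_upwards [Measure.ae_ne volume (0:ℝ)] with b hb
    rw [lintegral_const_mul _ (hH2 (by fun_prop) (by fun_prop))]
    exact lintegral_affine_subst (fun a => H a (b - a)) (hH2 (by fun_prop) (by fun_prop)) (by simpa using hb) _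
  · simp only [Function.uncurry_def]
    exact (Measurable.mul (by fun_prop) (hH2 (by fun_prop) (by fun_prop))).aemeasurable

/-- The total mass of the unnormalised law of the slope `t`, which fixes the normalising constant. -/
theorem lintegral_slope_density (ρ : ℝ) (hρ : ρ ∈ Set.Ioo (-1 : ℝ) 1) :
    ∫⁻ t : ℝ, ENNReal.ofReal ((1 - ρ) + (1 + ρ) * t ^ 2)⁻¹ = ENNReal.ofReal (π / √(1 - ρ ^ 2)) := by
  have h1 : 0 < 1 - ρ := by linarith [hρ.2]
  have h2 : 0 < 1 + ρ := by linarith [hρ.1]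
  have hA := Real.sqrt_pos.2 h1
  have hB := Real.sqrt_pos.2 h2
  have base : ∫⁻ t : ℝ, ENNReal.ofReal (1 + t ^ 2)⁻¹ = ENNReal.ofReal π := by
    rw [← ofReal_integral_eq_lintegral_ofReal integrable_inv_one_add_sq
      (Filter.Eventually.of_forall fun t => by positivity), integral_univ_inv_one_add_sq]
  rw [lintegral_affine_subst _ (by fun_prop) (c := √(1 - ρ) / √(1 + ρ)) (by positivity) 0,
    ← lintegral_const_mul _ (by fun_prop)]
  have : ∀ t : ℝ, ENNReal.ofReal |√(1 - ρ) / √(1 + ρ)| *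
      ENNReal.ofReal ((1 - ρ) + (1 + ρ) * (√(1 - ρ) / √(1 + ρ) * t + 0) ^ 2)⁻¹
      = ENNReal.ofReal (1 / √(1 - ρ ^ 2)) * ENNReal.ofReal (1 + t ^ 2)⁻¹ := by
    intro t
    rw [← ENNReal.ofReal_mul (by positivity), ← ENNReal.ofReal_mul (by positivity),
      abs_of_pos (by positivity)]
    congr 1
    have : 1 - ρ ^ 2 = (1 - ρ) * (1 + ρ) := by ring
    rw [this, Real.sqrt_mul h1.le, add_zero, mul_pow, div_pow, Real.sq_sqrt h1.le, Real.sq_sqrt h2.le]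
    have e := Real.sq_sqrt h1.le
    field_simp
    rw [e]
  simp only [this]
  rw [lintegral_const_mul _ (by fun_prop), base, ← ENNReal.ofReal_mul (by positivity)]
  congr 1; ring

/-- The law of `t`, with density proportional to `1 / ((1 - ρ) + (1 + ρ)t²)`, is carried by
`t ↦ (1 - t²) / (1 + t²)` to the claimed density on `(-1, 1)`. Everything is even in `t`, and the map
is a bijection from `(0, ∞)` onto `(-1, 1)`. -/
theorem lintegral_slope_to_resemblance (ρ : ℝ) (hρ : ρ ∈ Set.Ioo (-1 : ℝ) 1) (F : ℝ → ENNReal) (hF : Measurable F) :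
    ∫⁻ t : ℝ, F ((1 - t ^ 2) / (1 + t ^ 2)) * ENNReal.ofReal (√(1 - ρ ^ 2) / π) *
        ENNReal.ofReal ((1 - ρ) + (1 + ρ) * t ^ 2)⁻¹
      = ∫⁻ r in Set.Ioo (-1 : ℝ) 1, ENNReal.ofReal
          (1 / (π * (1 - ρ * r)) * √((1 - ρ ^ 2) / (1 - r ^ 2))) * F r := by
  have h1 : 0 < 1 - ρ := by linarith [hρ.2]
  have h2 : 0 < 1 + ρ := by linarith [hρ.1]
  set G : ℝ → ENNReal := fun t => F ((1 - t ^ 2) / (1 + t ^ 2)) * ENNReal.ofReal (√(1 - ρ ^ 2) / π) *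
        ENNReal.ofReal ((1 - ρ) + (1 + ρ) * t ^ 2)⁻¹ with hG
  have hGm : Measurable G := by fun_prop
  have heven : ∫⁻ t, G t = ∫⁻ t in Set.Ioi (0:ℝ), 2 * G t := by
    have hsym : ∫⁻ t in Set.Iic (0:ℝ), G t = ∫⁻ t in Set.Ioi (0:ℝ), G t := by
      rw [setLIntegral_congr Iio_ae_eq_Iic.symm, ← lintegral_indicator measurableSet_Iio,
        ← lintegral_indicator measurableSet_Ioi, ← lintegral_neg_eq_self]
      refine lintegral_congr fun t => ?_
      by_cases h : 0 < t <;> simp [Set.indicator, h, hG]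
    rw [← lintegral_add_compl G (measurableSet_Iic (a := (0:ℝ))), hsym, Set.compl_Iic,
      lintegral_const_mul _ hGm, two_mul]
  have himg : (fun t : ℝ => (1 - t ^ 2) / (1 + t ^ 2)) '' Set.Ioi 0 = Set.Ioo (-1) 1 := by
    ext r
    constructor
    · rintro ⟨t, ht, rfl⟩
      have ht : 0 < t := ht
      have : 0 < t ^ 2 := by positivity
      constructor
      · rw [lt_div_iff₀ (by positivity)]; linarith
      · rw [div_lt_iff₀ (by positivity)]; linarith
    · rintro ⟨ha, hb⟩
      have ha' : 0 < 1 + r := by linarith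
      have hb' : 0 < 1 - r := by linarith
      refine ⟨√((1 - r) / (1 + r)), Real.sqrt_pos.2 (by positivity), ?_⟩
      simp only
      rw [Real.sq_sqrt (by positivity)]
      field_simp
      ring
  have hinj : Set.InjOn (fun t : ℝ => (1 - t ^ 2) / (1 + t ^ 2)) (Set.Ioi 0) := by
    intro s hs t ht h
    have hs : 0 < s := hs
    have ht : 0 < t := ht
    simp only at h
    rw [div_eq_div_iff (by positivity) (by positivity)] at h
    have : s ^ 2 = t ^ 2 := by linarith
    exact (sq_eq_sq₀ hs.le ht.le).1 this
  have hder : ∀ t ∈ Set.Ioi (0:ℝ), HasDerivWithinAt (fun t : ℝ => (1 - t ^ 2) / (1 + t ^ 2))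
      (-4 * t / (1 + t ^ 2) ^ 2) (Set.Ioi 0) t := by
    intro t _
    have hne : 1 + t ^ 2 ≠ 0 := by positivity
    have := ((((hasDerivAt_id t).pow 2).const_sub 1).div (((hasDerivAt_id t).pow 2).const_add 1) hne)
    refine (this.congr_deriv ?_).hasDerivWithinAt
    simp
    ring
  rw [heven, ← himg, lintegral_image_eq_lintegral_abs_deriv_mul measurableSet_Ioi hder hinj]
  refine setLIntegral_congr_fun measurableSet_Ioi fun t ht => ?_
  have ht : 0 < t := ht
  simp only [hG]
  rw [← mul_assoc (ENNReal.ofReal _), ← ENNReal.ofReal_mul (abs_nonneg _), mul_assoc (F _),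
    ← ENNReal.ofReal_mul (by positivity), mul_left_comm, mul_comm (F _)]
  congr 1
  rw [show (2 : ENNReal) = ENNReal.ofReal 2 by simp, ← ENNReal.ofReal_mul (by norm_num)]
  congr 1
  have e1 : 1 - ((1 - t ^ 2) / (1 + t ^ 2)) ^ 2 = (2 * t / (1 + t ^ 2)) ^ 2 := by
    field_simp; ring
  have e2 : 1 - ρ * ((1 - t ^ 2) / (1 + t ^ 2)) = ((1 - ρ) + (1 + ρ) * t ^ 2) / (1 + t ^ 2) := by
    field_simp; ring
  have e3 : |(-4 * t / (1 + t ^ 2) ^ 2)| = 4 * t / (1 + t ^ 2) ^ 2 := by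
    rw [neg_mul, neg_div, abs_neg, abs_of_pos (by positivity)]
  have hq : 0 < (1 - ρ) + (1 + ρ) * t ^ 2 := by positivity
  rw [e1, e2, e3, Real.sqrt_div' _ (by positivity), Real.sqrt_sq (by positivity)]
  generalize (1 - ρ) + (1 + ρ) * t ^ 2 = q at hq ⊢
  field_simp
  ring

/-- For `σ > 0`, `ρ ∈ (-1,1)`, `Σ = σ²·[[1,ρ],[ρ,1]]`, and a Borel probability
measure `μ` on `ℝ²` with density `x ↦ g (xᵀ Σ⁻¹ x)` w.r.t. Lebesgue measure, the pushforward
of `μ` under the resemblance map `x ↦ 2x₁x₂/(x₁²+x₂²)` is absolutely continuous w.r.t.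
Lebesgue measure, supported on `(-1,1)`, with density
`r ↦ (1/(π(1-ρr)))·√((1-ρ²)/(1-r²))` there. -/
theorem stmt2 (σ ρ : ℝ) (hσ : 0 < σ) (hρ : ρ ∈ Set.Ioo (-1 : ℝ) 1)
    (g : ℝ → ℝ) (hg : Measurable g) (hg0 : ∀ t, 0 ≤ g t)
    (μ : Measure (Fin 2 → ℝ)) [IsProbabilityMeasure μ]
    (hμ : μ = volume.withDensity (fun x => ENNReal.ofReal
      (g (x ⬝ᵥ ((σ ^ 2 • !![1, ρ; ρ, 1])⁻¹ *ᵥ x))))) :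
    μ.map (fun x => 2 * x 0 * x 1 / ((x 0) ^ 2 + (x 1) ^ 2))
      = volume.withDensity (fun r => ENNReal.ofReal
          (Set.indicator (Set.Ioo (-1 : ℝ) 1)
            (fun r => 1 / (π * (1 - ρ * r)) * Real.sqrt ((1 - ρ ^ 2) / (1 - r ^ 2))) r)) := by
  have h1 : 0 < 1 - ρ := by linarith [hρ.2]
  have h2 : 0 < 1 + ρ := by linarith [hρ.1]
  have h3 : 0 < 1 - ρ ^ 2 := by nlinarith
  simp only [quadForm_eq σ ρ hσ hρ] at hμ
  -- In the coordinates `b`, `t` the quadratic form is `b² ((1 - ρ) + (1 + ρ)t²) / (2σ²(1 - ρ²))`.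
  set k : ℝ → ENNReal := fun y => ENNReal.ofReal (g (y / (2 * (σ ^ 2 * (1 - ρ ^ 2))))) with hk
  have hkm : Measurable k := by fun_prop
  set K : ENNReal := ∫⁻ b, ENNReal.ofReal |b / 2| * k (b ^ 2) with hK
  have key : ∀ F : ℝ → ENNReal, Measurable F →
      ∫⁻ x, F (2 * x 0 * x 1 / ((x 0) ^ 2 + (x 1) ^ 2)) ∂μ
        = ∫⁻ t : ℝ, F ((1 - t ^ 2) / (1 + t ^ 2)) * K *
            ENNReal.ofReal ((1 - ρ) + (1 + ρ) * t ^ 2)⁻¹ := by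
    intro F hF
    rw [hμ, lintegral_withDensity_eq_lintegral_mul _ (by fun_prop) (by fun_prop)]
    simp only [Pi.mul_apply]
    rw [lintegral_plane_slopes (fun a b => ENNReal.ofReal
      (g ((a ^ 2 - 2 * ρ * a * b + b ^ 2) / (σ ^ 2 * (1 - ρ ^ 2)))) *
        F (2 * a * b / (a ^ 2 + b ^ 2))) (by simp only [Function.uncurry_def]; fun_prop)]
    refine lintegral_congr fun t => ?_
    have hq : 0 < (1 - ρ) + (1 + ρ) * t ^ 2 := by positivity
    rw [mul_assoc, mul_comm K, hK, ← radial_scaling k hkm hq, ← lintegral_const_mul _ (by fun_prop)]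
    refine lintegral_congr_ae ?_
    filter_upwards [Measure.ae_ne volume (0:ℝ)] with b hb
    have e1 : 2 * (b / 2 * t + b / 2) * (b - (b / 2 * t + b / 2)) /
        ((b / 2 * t + b / 2) ^ 2 + (b - (b / 2 * t + b / 2)) ^ 2)
        = (1 - t ^ 2) / (1 + t ^ 2) := by
      have : (b / 2 * t + b / 2) ^ 2 + (b - (b / 2 * t + b / 2)) ^ 2 = b ^ 2 / 2 * (1 + t ^ 2) := by
        ring
      rw [this]
      field_simp
      ring
    have e2 : ((b / 2 * t + b / 2) ^ 2 - 2 * ρ * (b / 2 * t + b / 2) * (b - (b / 2 * t + b / 2))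
        + (b - (b / 2 * t + b / 2)) ^ 2) / (σ ^ 2 * (1 - ρ ^ 2))
        = b ^ 2 * ((1 - ρ) + (1 + ρ) * t ^ 2) / (2 * (σ ^ 2 * (1 - ρ ^ 2))) := by
      field_simp
      ring
    rw [e1, e2, ← mul_assoc, mul_comm]
  -- Total mass one determines the radial constant `K`, which in particular is finite.
  have hKval : K = ENNReal.ofReal (√(1 - ρ ^ 2) / π) := by
    have := key (fun _ => 1) measurable_const
    simp only [lintegral_const, measure_univ, one_mul] at this
    rw [lintegral_const_mul _ (by fun_prop), lintegral_slope_density ρ hρ] at this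
    have hs := Real.sqrt_pos.2 h3
    calc K = K * (ENNReal.ofReal (π / √(1 - ρ ^ 2)) * ENNReal.ofReal (√(1 - ρ ^ 2) / π)) := by
          rw [← ENNReal.ofReal_mul (by positivity)]
          have : π / √(1 - ρ ^ 2) * (√(1 - ρ ^ 2) / π) = 1 := by field_simp
          rw [this]; simp
      _ = _ := by rw [← mul_assoc, ← this, one_mul]
  refine Measure.ext_of_lintegral _ fun F hF => ?_
  rw [lintegral_map hF (by fun_prop), key F hF, hKval, lintegral_slope_to_resemblance ρ hρ F hF,
    lintegral_withDensity_eq_lintegral_mul _ (by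
      refine ENNReal.measurable_ofReal.comp (Measurable.indicator (by fun_prop) measurableSet_Ioo)) hF,
    ← lintegral_indicator measurableSet_Ioo]
  refine lintegral_congr fun r => ?_
  by_cases h : r ∈ Set.Ioo (-1 : ℝ) 1
  · simp only [Pi.mul_apply, Set.indicator_of_mem h]
  · simp only [Pi.mul_apply, Set.indicator_of_notMem h, ENNReal.ofReal_zero, zero_mul]
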